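/- arXiv:1609.09179 — 11 statements merged into one kernel-verified Lean document; each statement's English description precedes it below -/
import Mathlib

section
/- For every feasible solution ȳ ∈ Ω and every scenario c (i.e., every c : Fin n → ℝ with l i ≤ c i ≤ u i for all i), the regret of ȳ in c is at most the regret of ȳ in the induced scenario s(ȳ); that is, (Σ_i c i * ȳ i − min_{x∈Ω} Σ_i c i * x i) ≤ (Σ_i s(ȳ) i * ȳ i − min_{x∈Ω} Σ_i s(ȳ) i * x i). -/
open Finset

/-- For every feasible solution `ybar ∈ Ω` and every scenario `c`, the regret of
`ybar` in `c` is at most the regret of `ybar` in the induced scenario `s(ybar)`,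
where `s(ybar) i = l i + (u i - l i) * ybar i`. -/
theorem regret_le_regret_induced_scenario
    (n : ℕ) (hn : 0 < n) (l u : Fin n → ℝ)
    (hl : ∀ i, 0 ≤ l i) (hlu : ∀ i, l i ≤ u i)
    (Ω : Finset (Fin n → ℝ)) (hΩ : Ω.Nonempty)
    (hbin : ∀ y ∈ Ω, ∀ i, y i = 0 ∨ y i = 1)
    (ybar : Fin n → ℝ) (hybar : ybar ∈ Ω)
    (c : Fin n → ℝ) (hc : ∀ i, l i ≤ c i ∧ c i ≤ u i) :
    (∑ i, c i * ybar i) - Ω.inf' hΩ (fun x => ∑ i, c i * x i) ≤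
      (∑ i, (l i + (u i - l i) * ybar i) * ybar i) -
        Ω.inf' hΩ (fun x => ∑ i, (l i + (u i - l i) * ybar i) * x i) := by
  obtain ⟨x, hx, hxe⟩ := Finset.exists_mem_eq_inf' hΩ (fun x => ∑ i, c i * x i)
  have h1 := Finset.inf'_le (fun x => ∑ i, (l i + (u i - l i) * ybar i) * x i) hx
  have h2 : (∑ i, c i * ybar i) + (∑ i, (l i + (u i - l i) * ybar i) * x i) ≤
      (∑ i, (l i + (u i - l i) * ybar i) * ybar i) + ∑ i, c i * x i := by
    rw [← Finset.sum_add_distrib, ← Finset.sum_add_distrib]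
    apply Finset.sum_le_sum
    intro i _
    obtain ⟨hc1, hc2⟩ := hc i
    rcases hbin x hx i with h | h <;> rcases hbin ybar hybar i with h' | h' <;>
      rw [h, h'] <;> linarith
  rw [hxe]
  linarith
end

section
/- For every feasible solution ȳ ∈ Ω, the robustness cost R_ȳ (the supremum over all scenarios c of the regret of ȳ in c) is attained at the induced scenario s(ȳ) and satisfies R_ȳ = Σ_i u i * ȳ i − min_{x∈Ω} Σ_i (l i + (u i − l i) * ȳ i) * x i. -/
open Finset

/-- For every `ybar ∈ Ω`, the robustness cost (supremum over all scenarios of the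
regret) is attained at the induced scenario `s(ybar)` and equals
`∑ i, u i * ybar i - min_{x ∈ Ω} ∑ i, (l i + (u i - l i) * ybar i) * x i`. -/
theorem robustness_cost_attained_at_induced_scenario
    (n : ℕ) (hn : 0 < n) (l u : Fin n → ℝ)
    (hl : ∀ i, 0 ≤ l i) (hlu : ∀ i, l i ≤ u i)
    (Ω : Finset (Fin n → ℝ)) (hΩ : Ω.Nonempty)
    (hbin : ∀ y ∈ Ω, ∀ i, y i = 0 ∨ y i = 1)
    (ybar : Fin n → ℝ) (hybar : ybar ∈ Ω) :
    IsGreatest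
      {r : ℝ | ∃ c : Fin n → ℝ, (∀ i, l i ≤ c i ∧ c i ≤ u i) ∧
        r = (∑ i, c i * ybar i) - Ω.inf' hΩ (fun x => ∑ i, c i * x i)}
      ((∑ i, (l i + (u i - l i) * ybar i) * ybar i) -
        Ω.inf' hΩ (fun x => ∑ i, (l i + (u i - l i) * ybar i) * x i)) ∧
    sSup {r : ℝ | ∃ c : Fin n → ℝ, (∀ i, l i ≤ c i ∧ c i ≤ u i) ∧
        r = (∑ i, c i * ybar i) - Ω.inf' hΩ (fun x => ∑ i, c i * x i)} =
      (∑ i, u i * ybar i) -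
        Ω.inf' hΩ (fun x => ∑ i, (l i + (u i - l i) * ybar i) * x i) := by
  have key : IsGreatest
      {r : ℝ | ∃ c : Fin n → ℝ, (∀ i, l i ≤ c i ∧ c i ≤ u i) ∧
        r = (∑ i, c i * ybar i) - Ω.inf' hΩ (fun x => ∑ i, c i * x i)}
      ((∑ i, (l i + (u i - l i) * ybar i) * ybar i) -
        Ω.inf' hΩ (fun x => ∑ i, (l i + (u i - l i) * ybar i) * x i)) := by
    constructor
    · refine ⟨fun i => l i + (u i - l i) * ybar i, fun i => ?_, rfl⟩
      have h := hlu i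
      rcases hbin ybar hybar i with h0 | h0 <;> simp [h0, h]
    · rintro r ⟨c, hc, rfl⟩
      obtain ⟨x, hx, hxe⟩ := Finset.exists_mem_eq_inf' hΩ (fun x => ∑ i, c i * x i)
      have h1 := Finset.inf'_le (fun x => ∑ i, (l i + (u i - l i) * ybar i) * x i) hx
      rw [hxe]
      have h2 : ∑ i, (c i * ybar i - c i * x i) ≤
          ∑ i, ((l i + (u i - l i) * ybar i) * ybar i -
            (l i + (u i - l i) * ybar i) * x i) := by
        refine Finset.sum_le_sum fun i _ => ?_
        obtain ⟨ha, hb⟩ := hc i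
        rcases hbin ybar hybar i with h0 | h0 <;> rcases hbin x hx i with h3 | h3 <;>
          rw [h0, h3] <;> linarith
      rw [Finset.sum_sub_distrib, Finset.sum_sub_distrib] at h2
      linarith
  refine ⟨key, ?_⟩
  rw [key.csSup_eq]
  congr 1
  refine Finset.sum_congr rfl fun i _ => ?_
  rcases hbin ybar hybar i with h0 | h0 <;> simp [h0]
end

section
/- The MILP reformulation is exact: the minimum over all pairs (y, ρ) with y ∈ Ω, ρ ∈ ℝ, and ρ ≤ Σ_i (l i + (u i − l i) * y i) * x̄ i for every x̄ ∈ Ω, of the objective Σ_i u i * y i − ρ, equals the minimum over y ∈ Ω of the robustness cost R_y. -/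
open Finset

lemma regret_isGreatest
    (n : ℕ) (l u : Fin n → ℝ) (hlu : ∀ i, l i ≤ u i)
    (Ω : Finset (Fin n → ℝ)) (hΩ : Ω.Nonempty)
    (hbin : ∀ y ∈ Ω, ∀ i, y i = 0 ∨ y i = 1) (y : Fin n → ℝ) (hy : y ∈ Ω) :
    IsGreatest {r : ℝ | ∃ c : Fin n → ℝ, (∀ i, l i ≤ c i ∧ c i ≤ u i) ∧
          r = (∑ i, c i * y i) - Ω.inf' hΩ (fun x => ∑ i, c i * x i)}
      ((∑ i, u i * y i) - Ω.inf' hΩ (fun x => ∑ i, (l i + (u i - l i) * y i) * x i)) := by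
  constructor
  · refine ⟨fun i => l i + (u i - l i) * y i, fun i => ?_, ?_⟩
    · have := hlu i
      rcases hbin y hy i with h | h <;> simp [h, this]
    · congr 1
      refine Finset.sum_congr rfl fun i _ => ?_
      rcases hbin y hy i with h | h <;> simp [h]
  · rintro r ⟨c, hc, rfl⟩
    obtain ⟨x, hx, hxe⟩ := Finset.exists_mem_eq_inf' hΩ (fun x => ∑ i, c i * x i)
    rw [hxe]
    have h1 := Finset.inf'_le (fun x : Fin n → ℝ => ∑ i, (l i + (u i - l i) * y i) * x i) hx
    have h2 : (∑ i, c i * y i) - ∑ i, c i * x i ≤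
        (∑ i, u i * y i) - ∑ i, (l i + (u i - l i) * y i) * x i := by
      rw [← Finset.sum_sub_distrib, ← Finset.sum_sub_distrib]
      refine Finset.sum_le_sum fun i _ => ?_
      have := hc i
      rcases hbin y hy i with h | h <;> rcases hbin x hx i with h' | h' <;>
        simp only [h, h'] <;> linarith
    linarith

/-- The MILP reformulation is exact: the minimum, over all pairs `(y, ρ)` with
`y ∈ Ω`, `ρ : ℝ` and `ρ ≤ ∑ i, (l i + (u i - l i) * y i) * x̄ i` for every `x̄ ∈ Ω`, of the
objective `∑ i, u i * y i - ρ` equals the minimum over `y ∈ Ω` of the robustness cost `R_y`. -/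
theorem milp_reformulation_exact
    (n : ℕ) (hn : 0 < n) (l u : Fin n → ℝ)
    (hl : ∀ i, 0 ≤ l i) (hlu : ∀ i, l i ≤ u i)
    (Ω : Finset (Fin n → ℝ)) (hΩ : Ω.Nonempty)
    (hbin : ∀ y ∈ Ω, ∀ i, y i = 0 ∨ y i = 1) :
    IsLeast
      {v : ℝ | ∃ y ∈ Ω, ∃ ρ : ℝ,
        (∀ xbar ∈ Ω, ρ ≤ ∑ i, (l i + (u i - l i) * y i) * xbar i) ∧
        v = (∑ i, u i * y i) - ρ}
      (Ω.inf' hΩ (fun y =>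
        sSup {r : ℝ | ∃ c : Fin n → ℝ, (∀ i, l i ≤ c i ∧ c i ≤ u i) ∧
          r = (∑ i, c i * y i) - Ω.inf' hΩ (fun x => ∑ i, c i * x i)})) := by
  have key := fun y hy => (regret_isGreatest n l u hlu Ω hΩ hbin y hy).csSup_eq
  constructor
  · obtain ⟨y, hy, hye⟩ := Finset.exists_mem_eq_inf' hΩ (fun y =>
        sSup {r : ℝ | ∃ c : Fin n → ℝ, (∀ i, l i ≤ c i ∧ c i ≤ u i) ∧
          r = (∑ i, c i * y i) - Ω.inf' hΩ (fun x => ∑ i, c i * x i)})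
    rw [hye]
    exact ⟨y, hy, _, fun x hx => Finset.inf'_le
      (fun x : Fin n → ℝ => ∑ i, (l i + (u i - l i) * y i) * x i) hx, key y hy⟩
  · rintro v ⟨y, hy, ρ, hρ, rfl⟩
    refine (Finset.inf'_le _ hy).trans ?_
    rw [key y hy]
    have := Finset.le_inf' hΩ (fun x : Fin n → ℝ => ∑ i, (l i + (u i - l i) * y i) * x i) hρ
    linarith
end

section
/- Tightness of the LP-dual-based heuristic under total unimodularity (second part of Proposition 1): if the matrix A is totally unimodular and every entry of b is an integer, then the infimum, over all triples (y, λ, μ) with y ∈ Ω, λ : Fin m → ℝ, λ ≥ 0, μ : Fin n → ℝ, μ ≤ 0, and (Aᵀ λ) i + μ i ≤ l i + (u i − l i) * y i for all i, of the quantity Σ_i (l i + (u i − l i) * y i) * y i − Σ_k b k * λ k − Σ_i μ i, equals min_{y∈Ω} R_y, the optimal robustness cost. -/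
open Finset

open Matrix in
/-- A real matrix with trivial kernel has a nonsingular square row submatrix. -/
lemma tu_exists_rows {T F : Type} [Fintype T] [Fintype F] [DecidableEq F] (M : Matrix T F ℝ)
    (h : ∀ d, M.mulVec d = 0 → d = 0) : ∃ f : F → T, (M.submatrix f id).det ≠ 0 := by
  obtain ⟨κ, a, ha, hsp, hli⟩ := exists_linearIndependent' ℝ M.row
  have : Finite κ := Finite.of_injective a ha
  have : Fintype κ := Fintype.ofFinite κ
  have hinj : Function.Injective M.mulVecLin := by
    rw [← LinearMap.ker_eq_bot, LinearMap.ker_eq_bot']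
    intro d hd
    exact h d (by simpa using hd)
  have h1 : M.rank = Fintype.card F := by
    rw [Matrix.rank, LinearMap.finrank_range_of_inj hinj]; simp
  have h2 : Fintype.card κ = Fintype.card F := by
    rw [linearIndependent_iff_card_eq_finrank_span.mp hli, Set.finrank, hsp,
      ← M.rank_eq_finrank_span_row, h1]
  let e : F ≃ κ := (Fintype.equivOfCardEq h2).symm
  refine ⟨a ∘ e, ?_⟩
  have h3 : LinearIndependent ℝ (M.submatrix (a ∘ e) id).row := hli.comp e e.injective
  rw [Matrix.linearIndependent_rows_iff_isUnit, Matrix.isUnit_iff_isUnit_det] at h3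
  exact h3.ne_zero

/-- The feasible region of the LP relaxation. -/
def tuPoly {m n : ℕ} (A : Matrix (Fin m) (Fin n) ℝ) (b : Fin m → ℝ) : Set (Fin n → ℝ) :=
  {x | (∀ k, b k ≤ A.mulVec x k) ∧ ∀ i, 0 ≤ x i ∧ x i ≤ 1}

lemma tu_sign_int {r : ℝ} (h : r ∈ Set.range (SignType.cast : SignType → ℝ)) : ∃ z : ℤ, r = z := by
  obtain ⟨s, rfl⟩ := h
  exact ⟨(s : ℤ), by cases s <;> simp⟩

/-- An integral unimodular system has only integral solutions. -/
lemma tu_solve_int {F : Type} [Fintype F] [DecidableEq F] (B : Matrix F F ℝ)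
    (hB : ∀ i j, ∃ z : ℤ, B i j = z) (hdet : B.det ∈ Set.range (SignType.cast : SignType → ℝ))
    (hne : B.det ≠ 0) (x : F → ℝ) (hx : ∀ i, ∃ z : ℤ, B.mulVec x i = z) (i : F) :
    ∃ z : ℤ, x i = z := by
  choose B' hB' using hB
  choose r hr using hx
  have hBm : B = (Int.castRingHom ℝ).mapMatrix (Matrix.of B') := by
    ext i j; simp [hB']
  have hadj : B.adjugate = (Int.castRingHom ℝ).mapMatrix (Matrix.of B').adjugate := by
    rw [hBm, ← RingHom.map_adjugate]
  have h1 : B.adjugate.mulVec (B.mulVec x) = B.det • x := by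
    rw [Matrix.mulVec_mulVec, Matrix.adjugate_mul, Matrix.smul_mulVec, Matrix.one_mulVec]
  have h2 : B.det * x i = (((Matrix.of B').adjugate.mulVec r i : ℤ) : ℝ) := by
    have := congrFun h1 i
    rw [Pi.smul_apply, smul_eq_mul] at this
    rw [← this, hadj]
    simp [Matrix.mulVec, dotProduct, ← hr]
  obtain ⟨s, hs⟩ := hdet
  cases s
  · simp at hs; exact absurd hs.symm hne
  · simp at hs
    refine ⟨-((Matrix.of B').adjugate.mulVec r i), ?_⟩
    push_cast
    rw [← h2, ← hs]; ring
  · simp at hs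
    refine ⟨((Matrix.of B').adjugate.mulVec r i), ?_⟩
    rw [← h2, ← hs]; ring

lemma tu_extreme_int {m n : ℕ} (A : Matrix (Fin m) (Fin n) ℝ) (b : Fin m → ℝ)
    (hA : A.IsTotallyUnimodular) (hb : ∀ k, ∃ z : ℤ, b k = z) (x : Fin n → ℝ)
    (hx : x ∈ (tuPoly A b).extremePoints ℝ) (i : Fin n) : x i = 0 ∨ x i = 1 := by
  classical
  let F := {i : Fin n // 0 < x i ∧ x i < 1}
  let T := {k : Fin m // A.mulVec x k = b k}
  let M : Matrix T F ℝ := A.submatrix Subtype.val Subtype.val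
  obtain ⟨hxP, hext⟩ := mem_extremePoints.1 hx
  have h01 : ∀ i, ¬ (0 < x i ∧ x i < 1) → x i = 0 ∨ x i = 1 := by
    intro i hi
    obtain ⟨h0, h1⟩ := hxP.2 i
    by_contra hc
    push Not at hc
    exact hi ⟨lt_of_le_of_ne h0 (Ne.symm hc.1), lt_of_le_of_ne h1 hc.2⟩
  have hker : ∀ d, M.mulVec d = 0 → d = 0 := by
    intro d hd
    let D : Fin n → ℝ := fun i => if h : 0 < x i ∧ x i < 1 then d ⟨i, h⟩ else 0
    have hDF : ∀ i : F, D i.1 = d i := fun i => by simp [D, i.2]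
    have hDn : ∀ i, ¬ (0 < x i ∧ x i < 1) → D i = 0 := fun i h => dif_neg h
    have hAD : ∀ k, A.mulVec x k = b k → A.mulVec D k = 0 := by
      intro k hk
      have h1 : M.mulVec d ⟨k, hk⟩ = (0 : ℝ) := congrFun hd ⟨k, hk⟩
      rw [← h1]
      simp only [Matrix.mulVec, dotProduct, M]
      rw [← Fintype.sum_subtype_add_sum_subtype (fun i => 0 < x i ∧ x i < 1)]
      have : ∑ i : {i // ¬ (0 < x i ∧ x i < 1)}, A k i.1 * D i.1 = 0 :=
        Finset.sum_eq_zero fun i _ => by rw [hDn i.1 i.2, mul_zero]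
      rw [this, add_zero]
      exact Finset.sum_congr rfl fun i _ => by rw [hDF i]; rfl
    have hev : ∀ᶠ t : ℝ in nhds 0, x + t • D ∈ tuPoly A b := by
      have e1 : ∀ᶠ t : ℝ in nhds 0, ∀ k, b k ≤ A.mulVec (x + t • D) k := by
        rw [Filter.eventually_all]
        intro k
        simp only [Matrix.mulVec_add, Matrix.mulVec_smul, Pi.add_apply, Pi.smul_apply, smul_eq_mul]
        rcases (hxP.1 k).eq_or_lt with h | h
        · exact Filter.Eventually.of_forall fun t => by rw [hAD k h.symm, ← h]; simp
        · have hc : Filter.Tendsto (fun t : ℝ => A.mulVec x k + t * A.mulVec D k) (nhds 0)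
              (nhds (A.mulVec x k + 0 * A.mulVec D k)) :=
            Continuous.tendsto (by fun_prop) 0
          rw [zero_mul, add_zero] at hc
          exact (hc.eventually (lt_mem_nhds h)).mono fun t ht => ht.le
      have e2 : ∀ᶠ t : ℝ in nhds 0, ∀ i, 0 ≤ (x + t • D) i ∧ (x + t • D) i ≤ 1 := by
        rw [Filter.eventually_all]
        intro i
        simp only [Pi.add_apply, Pi.smul_apply, smul_eq_mul]
        by_cases h : 0 < x i ∧ x i < 1
        · have hc : Filter.Tendsto (fun t : ℝ => x i + t * D i) (nhds 0)
              (nhds (x i + 0 * D i)) :=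
            Continuous.tendsto (by fun_prop) 0
          rw [zero_mul, add_zero] at hc
          filter_upwards [hc.eventually (lt_mem_nhds h.1), hc.eventually (gt_mem_nhds h.2)]
            with t h1 h2 using ⟨h1.le, h2.le⟩
        · exact Filter.Eventually.of_forall fun t => by
            rw [hDn i h]; simpa using hxP.2 i
      filter_upwards [e1, e2] with t h1 h2 using ⟨h1, h2⟩
    have hev' : ∀ᶠ t : ℝ in nhds 0, x + (-t) • D ∈ tuPoly A b := by
      have : Filter.Tendsto (fun t : ℝ => -t) (nhds 0) (nhds 0) := by
        simpa using (continuous_neg.tendsto (0 : ℝ))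
      exact this.eventually hev
    obtain ⟨t, ⟨ht1, ht2⟩, ht0⟩ :=
      (((hev.and hev').filter_mono nhdsWithin_le_nhds).and
        (self_mem_nhdsWithin : Set.Ioi (0 : ℝ) ∈ nhdsWithin 0 (Set.Ioi 0))).exists
    have hseg : x ∈ openSegment ℝ (x + t • D) (x + (-t) • D) := by
      refine ⟨1 / 2, 1 / 2, by norm_num, by norm_num, by norm_num, ?_⟩
      ext j; simp; ring
    have h3 := (hext _ ht1 _ ht2 hseg).1
    ext j
    have h4 := congrFun h3 j.1
    simp only [Pi.add_apply, Pi.smul_apply, smul_eq_mul, hDF j] at h4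
    have ht0' : t ≠ 0 := ne_of_gt ht0
    have h5 : t * d j = 0 := by linarith
    simpa [ht0'] using h5
  obtain ⟨f, hf⟩ := tu_exists_rows M hker
  by_contra hi
  have hiF : 0 < x i ∧ x i < 1 := by
    by_contra h; exact hi (h01 i h)
  have hAint : ∀ k j, ∃ z : ℤ, A k j = z := fun k j => tu_sign_int (hA.apply k j)
  have hB : M.submatrix f id = A.submatrix (fun j => (f j).1) Subtype.val := rfl
  have hdet : (M.submatrix f id).det ∈ Set.range (SignType.cast : SignType → ℝ) := by
    rw [hB]
    exact (Matrix.isTotallyUnimodular_iff_fintype A).1 hA F _ _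
  obtain ⟨z, hz⟩ := tu_solve_int (M.submatrix f id) (fun j k => hAint _ _) hdet hf
    (fun j : F => x j.1) (by
      intro j
      have h1 : A.mulVec x (f j).1 = b (f j).1 := (f j).2
      simp only [Matrix.mulVec, dotProduct] at h1
      rw [← Fintype.sum_subtype_add_sum_subtype (fun i => 0 < x i ∧ x i < 1)] at h1
      have h2 : ∃ z : ℤ, ∑ i : {i // ¬ (0 < x i ∧ x i < 1)}, A (f j).1 i.1 * x i.1 = z := by
        have : ∀ i : {i // ¬ (0 < x i ∧ x i < 1)}, ∃ z : ℤ, A (f j).1 i.1 * x i.1 = z := by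
          intro i
          obtain ⟨w, hw⟩ := hAint (f j).1 i.1
          rcases h01 i.1 i.2 with h | h
          · exact ⟨0, by simp [h]⟩
          · exact ⟨w, by simp [h, hw]⟩
        choose w hw using this
        exact ⟨∑ i, w i, by push_cast; exact Finset.sum_congr rfl fun i _ => hw i⟩
      obtain ⟨w, hw⟩ := h2
      obtain ⟨v, hv⟩ := hb (f j).1
      refine ⟨v - w, ?_⟩
      rw [hw, hv] at h1
      push_cast
      rw [← h1]
      simp only [Matrix.mulVec, dotProduct, add_sub_cancel_right]
      rfl) ⟨i, hiF⟩
  simp only at hz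
  rw [hz] at hiF
  have h1 : (0 : ℤ) < z := by exact_mod_cast hiF.1
  have h2 : z < (1 : ℤ) := by exact_mod_cast hiF.2
  omega

lemma tu_poly_compact {m n : ℕ} (A : Matrix (Fin m) (Fin n) ℝ) (b : Fin m → ℝ) :
    IsCompact (tuPoly A b) := by
  have h : tuPoly A b = Set.Icc (0 : Fin n → ℝ) 1 ∩ {x | ∀ k, b k ≤ A.mulVec x k} := by
    ext x
    simp only [tuPoly, Set.mem_ofPred_eq, Set.mem_inter_iff, Set.mem_Icc, Pi.le_def, Pi.zero_apply,
      Pi.one_apply, forall_and]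
    tauto
  rw [h]
  refine isCompact_Icc.inter_right ?_
  simp only [Set.ofPred_forall]
  refine isClosed_iInter fun k => isClosed_le continuous_const ?_
  simp only [Matrix.mulVec, dotProduct]
  fun_prop

lemma tu_lp_int {m n : ℕ} (A : Matrix (Fin m) (Fin n) ℝ) (b : Fin m → ℝ)
    (hA : A.IsTotallyUnimodular) (hb : ∀ k, ∃ z : ℤ, b k = z) (c x : Fin n → ℝ)
    (hx : x ∈ tuPoly A b) :
    ∃ y ∈ tuPoly A b, (∀ i, y i = 0 ∨ y i = 1) ∧ c ⬝ᵥ y ≤ c ⬝ᵥ x := by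
  let L : StrongDual ℝ (Fin n → ℝ) :=
    LinearMap.toContinuousLinearMap (-(dotProductBilin ℝ ℝ c))
  have hL : ∀ z, L z = - (c ⬝ᵥ z) := fun z => rfl
  have hexp : IsExposed ℝ (tuPoly A b) (L.toExposed (tuPoly A b)) :=
    ContinuousLinearMap.toExposed.isExposed
  obtain ⟨w, hw, hmax⟩ := (tu_poly_compact A b).exists_isMaxOn ⟨x, hx⟩ L.continuous.continuousOn
  obtain ⟨y, hy⟩ := (hexp.isCompact (tu_poly_compact A b)).extremePoints_nonempty
    ⟨w, hw, fun z hz => hmax hz⟩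
  have hy' := hexp.isExtreme.extremePoints_subset_extremePoints hy
  refine ⟨y, hy'.1, tu_extreme_int A b hA hb y hy', ?_⟩
  have := hy.1.2 x hx
  rw [hL, hL] at this
  linarith

lemma tu_strong_duality {m n : ℕ} (A : Matrix (Fin m) (Fin n) ℝ) (b : Fin m → ℝ)
    (c : Fin n → ℝ) (V ε : ℝ) (hε : 0 < ε) (hne : (tuPoly A b).Nonempty)
    (hV : ∀ x ∈ tuPoly A b, V ≤ c ⬝ᵥ x) :
    ∃ lam : Fin m → ℝ, ∃ mu : Fin n → ℝ, (∀ k, 0 ≤ lam k) ∧ (∀ i, mu i ≤ 0) ∧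
      (∀ i, A.transpose.mulVec lam i + mu i ≤ c i) ∧
      V - ε ≤ (∑ k, b k * lam k) + ∑ i, mu i := by
  let G : (Fin n → ℝ) → (Fin m → ℝ) × ℝ := fun x => (A.mulVec x, c ⬝ᵥ x)
  have hGlin : IsLinearMap ℝ G :=
    ⟨fun x y => by simp [G, Matrix.mulVec_add], fun r x => by simp [G, Matrix.mulVec_smul]⟩
  have hGc : Continuous G := (hGlin.mk' G).continuous_of_finiteDimensional
  let S := G '' Set.Icc 0 1
  let Q : Set ((Fin m → ℝ) × ℝ) := Set.Ici b ×ˢ Set.Iic (V - ε)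
  have hdis : Disjoint S Q := by
    rw [Set.disjoint_left]
    rintro _ ⟨x, hx, rfl⟩ ⟨h1, h2⟩
    have := hV x ⟨fun k => h1 k, fun i => ⟨hx.1 i, hx.2 i⟩⟩
    have h2' : c ⬝ᵥ x ≤ V - ε := h2
    linarith
  obtain ⟨f, s, t, hs, hst, ht⟩ := geometric_hahn_banach_compact_closed
    ((convex_Icc (0 : Fin n → ℝ) 1).is_linear_image hGlin) (isCompact_Icc.image hGc)
    ((convex_Ici b).prod (convex_Iic (V - ε))) (isClosed_Ici.prod isClosed_Iic) hdis
  let p : Fin m → ℝ := fun k => f (Pi.single k 1, 0)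
  let τ : ℝ := f (0, 1)
  have hf : ∀ (v : Fin m → ℝ) (r : ℝ), f (v, r) = ∑ k, p k * v k + τ * r := by
    intro v r
    have h1 : ((v, r) : (Fin m → ℝ) × ℝ) =
        ∑ k, v k • ((Pi.single k 1 : Fin m → ℝ), (0 : ℝ)) + r • ((0 : Fin m → ℝ), (1 : ℝ)) := by
      ext j
      · simp [Prod.fst_sum, Finset.sum_apply, Pi.single_apply]
      · simp [Prod.snd_sum]
    rw [h1, map_add, map_sum, map_smul]
    simp only [map_smul, smul_eq_mul, p, τ]
    congr 1
    · exact Finset.sum_congr rfl fun k _ => mul_comm _ _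
    · ring
  obtain ⟨x0, hx0⟩ := hne
  have hx0I : x0 ∈ Set.Icc (0 : Fin n → ℝ) 1 := ⟨fun i => (hx0.2 i).1, fun i => (hx0.2 i).2⟩
  have hτ : τ < 0 := by
    have h1 := hs _ ⟨x0, hx0I, rfl⟩
    have h2 := ht (A.mulVec x0, V - ε) ⟨fun k => hx0.1 k, Set.self_mem_Iic⟩
    simp only [G, hf] at h1 h2
    have h3 := hV x0 hx0
    by_contra hc
    push Not at hc
    nlinarith
  have hbt : t < ∑ k, p k * b k + τ * (V - ε) := by
    rw [← hf]; exact ht _ ⟨Set.self_mem_Ici, Set.self_mem_Iic⟩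
  have hp : ∀ k, 0 ≤ p k := by
    intro k
    by_contra hc
    push Not at hc
    set D := ∑ k, p k * b k + τ * (V - ε)
    have hr : 0 ≤ (D - t) / (-p k) := div_nonneg (by linarith) (by linarith)
    have h1 := ht (b + Pi.single k ((D - t) / (-p k)), V - ε)
      ⟨by
        intro j
        by_cases h : j = k
        · subst h; simpa using hr
        · simp [h], Set.self_mem_Iic⟩
    rw [hf] at h1
    simp only [Pi.add_apply, mul_add, Finset.sum_add_distrib, Pi.single_apply, mul_ite, mul_zero,
      Finset.sum_ite_eq', Finset.mem_univ, if_true] at h1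
    have h2 : p k * ((D - t) / (-p k)) = -(D - t) := by
      have : p k ≠ 0 := hc.ne
      field_simp
    have h3 : D = ∑ k, p k * b k + τ * (V - ε) := rfl
    have h4 : p k * ((D - t) / (-p k)) + (∑ k, p k * b k + τ * (V - ε)) = t := by
      rw [h2, ← h3]; ring
    simp only [mul_sub] at h1 h4
    linarith
  let lam : Fin m → ℝ := fun k => p k / (-τ)
  let mu : Fin n → ℝ := fun i => min 0 (c i - A.transpose.mulVec lam i)
  refine ⟨lam, mu, fun k => div_nonneg (hp k) (by linarith), fun i => min_le_left _ _,
    fun i => by have := min_le_right 0 (c i - A.transpose.mulVec lam i); simp only [mu]; linarith,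
    ?_⟩
  let x : Fin n → ℝ := fun i => if c i - A.transpose.mulVec lam i < 0 then 1 else 0
  have hxI : x ∈ Set.Icc (0 : Fin n → ℝ) 1 := by
    constructor <;> intro i <;> simp only [x] <;> split_ifs <;> simp
  have hmu : ∀ i, mu i = (c i - A.transpose.mulVec lam i) * x i := by
    intro i
    simp only [mu, x]
    split_ifs with h
    · rw [min_eq_right h.le, mul_one]
    · rw [min_eq_left (not_lt.1 h), mul_zero]
  have h1 := hs _ ⟨x, hxI, rfl⟩
  simp only [G, hf] at h1
  have h2 : ∑ i, mu i = c ⬝ᵥ x - ∑ k, lam k * A.mulVec x k := by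
    have : ∑ k, lam k * A.mulVec x k = ∑ i, A.transpose.mulVec lam i * x i := by
      change lam ⬝ᵥ A.mulVec x = A.transpose.mulVec lam ⬝ᵥ x
      rw [Matrix.dotProduct_mulVec, Matrix.mulVec_transpose]
    rw [this]
    simp only [hmu, dotProduct, sub_mul, Finset.sum_sub_distrib]
  have h3 : ∀ v : Fin m → ℝ, ∑ k, p k * v k = (-τ) * ∑ k, lam k * v k := by
    intro v
    rw [Finset.mul_sum]
    refine Finset.sum_congr rfl fun k _ => ?_
    simp only [lam]
    have : τ ≠ 0 := hτ.ne
    field_simp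
  rw [h3] at h1 hbt
  have h4 : ∑ k, b k * lam k = ∑ k, lam k * b k := Finset.sum_congr rfl fun k _ => mul_comm _ _
  rw [h2, h4]
  by_contra hc
  push Not at hc
  nlinarith

/-- Tightness of the LP-dual-based heuristic under total unimodularity (second part
of Proposition 1): if `A` is totally unimodular and `b` is integral, then the infimum over all
triples `(y, λ, μ)` with `y ∈ Ω`, `λ ≥ 0`, `μ ≤ 0` and `(Aᵀ λ) i + μ i ≤ l i + (u i - l i) * y i`
for all `i`, of `∑ i, (l i + (u i - l i) * y i) * y i - ∑ k, b k * λ k - ∑ i, μ i`, equals the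
optimal robustness cost `min_{y ∈ Ω} R_y`. -/
theorem lp_dual_heuristic_tight_of_totallyUnimodular
    (m n : ℕ) (hm : 0 < m) (hn : 0 < n)
    (A : Matrix (Fin m) (Fin n) ℝ) (b : Fin m → ℝ)
    (hA : A.IsTotallyUnimodular) (hb : ∀ k, ∃ z : ℤ, b k = z)
    (l u : Fin n → ℝ) (hl : ∀ i, 0 ≤ l i) (hlu : ∀ i, l i ≤ u i)
    (Ω : Set (Fin n → ℝ))
    (hΩdef : Ω = {y : Fin n → ℝ | (∀ k, b k ≤ A.mulVec y k) ∧ ∀ i, y i = 0 ∨ y i = 1})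
    (hΩne : Ω.Nonempty) :
    sInf {v : ℝ | ∃ y ∈ Ω, ∃ lam : Fin m → ℝ, ∃ mu : Fin n → ℝ,
        (∀ k, 0 ≤ lam k) ∧ (∀ i, mu i ≤ 0) ∧
        (∀ i, A.transpose.mulVec lam i + mu i ≤ l i + (u i - l i) * y i) ∧
        v = (∑ i, (l i + (u i - l i) * y i) * y i) - (∑ k, b k * lam k) - (∑ i, mu i)} =
      sInf {r : ℝ | ∃ y ∈ Ω,
        r = sSup {t : ℝ | ∃ c : Fin n → ℝ, (∀ i, l i ≤ c i ∧ c i ≤ u i) ∧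
          t = (∑ i, c i * y i) - sInf {v : ℝ | ∃ x ∈ Ω, v = ∑ i, c i * x i}}} := by
  classical
  subst hΩdef
  set Ω : Set (Fin n → ℝ) :=
    {y : Fin n → ℝ | (∀ k, b k ≤ A.mulVec y k) ∧ ∀ i, y i = 0 ∨ y i = 1} with hΩ
  have hΩP : ∀ y ∈ Ω, y ∈ tuPoly A b := by
    rintro y ⟨h1, h2⟩
    exact ⟨h1, fun i => by rcases h2 i with h | h <;> simp [h]⟩
  have hx0 : ∀ y ∈ Ω, ∀ i, 0 ≤ y i := fun y hy i => ((hΩP y hy).2 i).1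
  have hx1 : ∀ y ∈ Ω, ∀ i, y i ≤ 1 := fun y hy i => ((hΩP y hy).2 i).2
  let val : (Fin n → ℝ) → ℝ := fun c => sInf {v : ℝ | ∃ x ∈ Ω, v = ∑ i, c i * x i}
  have hval_le : ∀ c : Fin n → ℝ, (∀ i, 0 ≤ c i) → ∀ x ∈ Ω, val c ≤ ∑ i, c i * x i := by
    intro c hc x hx
    refine csInf_le ⟨0, ?_⟩ ⟨x, hx, rfl⟩
    rintro _ ⟨z, hz, rfl⟩
    exact Finset.sum_nonneg fun i _ => mul_nonneg (hc i) (hx0 z hz i)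
  have hle_val : ∀ (c : Fin n → ℝ) (V : ℝ), (∀ x ∈ Ω, V ≤ ∑ i, c i * x i) → V ≤ val c := by
    intro c V hV
    obtain ⟨x, hx⟩ := hΩne
    refine le_csInf ⟨_, x, hx, rfl⟩ ?_
    rintro _ ⟨z, hz, rfl⟩
    exact hV z hz
  let cy : (Fin n → ℝ) → Fin n → ℝ := fun y i => l i + (u i - l i) * y i
  have hcy : ∀ y ∈ Ω, ∀ i, l i ≤ cy y i ∧ cy y i ≤ u i := by
    intro y hy i
    have := hlu i
    rcases hy.2 i with h | h <;> simp [cy, h, this]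
  have hcy0 : ∀ y ∈ Ω, ∀ i, 0 ≤ cy y i := fun y hy i => (hl i).trans (hcy y hy i).1
  let g : (Fin n → ℝ) → ℝ := fun y => ∑ i, cy y i * y i - val (cy y)
  -- the worst-case scenario of `y` is `cy y`
  have hR : ∀ y ∈ Ω, sSup {t : ℝ | ∃ c : Fin n → ℝ, (∀ i, l i ≤ c i ∧ c i ≤ u i) ∧
      t = (∑ i, c i * y i) - sInf {v : ℝ | ∃ x ∈ Ω, v = ∑ i, c i * x i}} = g y := by
    intro y hy
    refine IsGreatest.csSup_eq ⟨⟨cy y, hcy y hy, rfl⟩, ?_⟩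
    rintro _ ⟨c, hc, rfl⟩
    change (∑ i, c i * y i) - val c ≤ ∑ i, cy y i * y i - val (cy y)
    have : val (cy y) + (∑ i, c i * y i) - ∑ i, cy y i * y i ≤ val c := by
      refine hle_val c _ fun x hx => ?_
      have h1 := hval_le (cy y) (hcy0 y hy) x hx
      have h2 : ∑ i, cy y i * x i + ∑ i, c i * y i ≤ ∑ i, c i * x i + ∑ i, cy y i * y i := by
        rw [← Finset.sum_add_distrib, ← Finset.sum_add_distrib]
        refine Finset.sum_le_sum fun i _ => ?_
        have a1 := hx0 x hx i
        have a2 := hx1 x hx i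
        obtain ⟨a3, a4⟩ := hc i
        rcases hy.2 i with h | h
        · simp only [cy, h]; nlinarith
        · simp only [cy, h]; nlinarith
      linarith
    linarith
  have hg0 : ∀ y ∈ Ω, 0 ≤ g y := by
    intro y hy
    have := hval_le (cy y) (hcy0 y hy) y hy
    simp only [g]; linarith
  -- weak duality
  have hweak : ∀ y ∈ Ω, ∀ (lam : Fin m → ℝ) (mu : Fin n → ℝ), (∀ k, 0 ≤ lam k) →
      (∀ i, mu i ≤ 0) → (∀ i, A.transpose.mulVec lam i + mu i ≤ l i + (u i - l i) * y i) →
      g y ≤ (∑ i, (l i + (u i - l i) * y i) * y i) - (∑ k, b k * lam k) - (∑ i, mu i) := by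
    intro y hy lam mu hlam hmu hc
    have : (∑ k, b k * lam k) + (∑ i, mu i) ≤ val (cy y) := by
      refine hle_val _ _ fun x hx => ?_
      have h1 : ∑ k, b k * lam k ≤ ∑ k, lam k * A.mulVec x k :=
        Finset.sum_le_sum fun k _ => by nlinarith [hx.1 k, hlam k]
      have h2 : ∑ k, lam k * A.mulVec x k = ∑ i, A.transpose.mulVec lam i * x i := by
        change lam ⬝ᵥ A.mulVec x = A.transpose.mulVec lam ⬝ᵥ x
        rw [Matrix.dotProduct_mulVec, Matrix.mulVec_transpose]
      have h3 : ∑ i, A.transpose.mulVec lam i * x i + ∑ i, mu i ≤ ∑ i, cy y i * x i := by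
        rw [← Finset.sum_add_distrib]
        refine Finset.sum_le_sum fun i _ => ?_
        have a1 := hmu i
        have a2 := hc i
        rcases hx.2 i with h | h
        · simp only [cy, h]; linarith
        · simp only [cy, h]; linarith
      linarith
    change ∑ i, cy y i * y i - val (cy y) ≤ (∑ i, cy y i * y i) - _ - _
    linarith
  obtain ⟨y0, hy0⟩ := hΩne
  apply le_antisymm
  · refine le_csInf ⟨_, y0, hy0, rfl⟩ ?_
    rintro _ ⟨y, hy, rfl⟩
    rw [hR y hy]
    refine le_of_forall_pos_le_add fun ε hε => ?_
    obtain ⟨lam, mu, h1, h2, h3, h4⟩ := tu_strong_duality A b (cy y) (val (cy y)) ε hε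
      ⟨y, hΩP y hy⟩ (by
        intro x hx
        obtain ⟨z, hz, hz01, hzx⟩ := tu_lp_int A b hA hb (cy y) x hx
        exact (hval_le (cy y) (hcy0 y hy) z ⟨hz.1, hz01⟩).trans hzx)
    refine csInf_le_of_le ⟨0, ?_⟩ ⟨y, hy, lam, mu, h1, h2, h3, rfl⟩ ?_
    · rintro _ ⟨y', hy', lam', mu', g1, g2, g3, rfl⟩
      exact (hg0 y' hy').trans (hweak y' hy' lam' mu' g1 g2 g3)
    · change (∑ i, cy y i * y i) - _ - _ ≤ ∑ i, cy y i * y i - val (cy y) + ε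
      linarith
  · obtain ⟨lam, mu, h1, h2, h3, -⟩ := tu_strong_duality A b (cy y0) (val (cy y0)) 1 one_pos
      ⟨y0, hΩP y0 hy0⟩ (by
        intro x hx
        obtain ⟨z, hz, hz01, hzx⟩ := tu_lp_int A b hA hb (cy y0) x hx
        exact (hval_le (cy y0) (hcy0 y0 hy0) z ⟨hz.1, hz01⟩).trans hzx)
    refine le_csInf ⟨_, y0, hy0, lam, mu, h1, h2, h3, rfl⟩ ?_
    rintro _ ⟨y, hy, lam', mu', g1, g2, g3, rfl⟩
    refine csInf_le_of_le ⟨0, ?_⟩ ⟨y, hy, rfl⟩ ?_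
    · rintro _ ⟨y', hy', rfl⟩
      rw [hR y' hy']
      exact hg0 y' hy'
    · rw [hR y hy]
      exact hweak y hy lam' mu' g1 g2 g3
end

section
/- Theorem 2 (monotonicity of induced-scenario regret under taking sub-paths): let β ∈ ℤ and let p ∈ P(β) be a non-elementary path (a path from o to t that visits some vertex more than once). Then for every elementary path p̃ ∈ P(β) with A[p̃] ⊊ A[p], the β-restricted regret of p̃ in its induced scenario s(p̃) is at most the β-restricted regret of p in its induced scenario s(p): C_{p̃}^{s(p̃)} − min_{q∈P(β)} C_q^{s(p̃)} ≤ C_p^{s(p)} − min_{q∈P(β)} C_q^{s(p)}. -/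
open Finset

/-- The arcs of a walk described by its list of vertices: consecutive pairs. -/
def walkArcs {V : Type*} (vs : List V) : List (V × V) := vs.zip vs.tail

/-- `IsPath A o t vs` : `vs` describes a directed walk from `o` to `t` whose arcs all belong to
`A` and are pairwise distinct. -/
def IsPath {V : Type*} (A : Finset (V × V)) (o t : V) (vs : List V) : Prop :=
  vs.head? = some o ∧ vs.getLast? = some t ∧
    (∀ a ∈ walkArcs vs, a ∈ A) ∧ (walkArcs vs).Nodup

/-- The set `A[p]` of arcs of a path. -/
def arcSet {V : Type*} [DecidableEq V] (vs : List V) : Finset (V × V) :=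
  (walkArcs vs).toFinset

/-- Theorem 2: monotonicity of induced-scenario regret under taking sub-paths:
if `p ∈ P(β)` is a non-elementary path and `p̃ ∈ P(β)` is an elementary path with
`A[p̃] ⊊ A[p]`, then the β-restricted regret of `p̃` in its induced scenario `s(p̃)` is at most
the β-restricted regret of `p` in its induced scenario `s(p)`. -/
theorem induced_regret_mono_of_subpath
    {V : Type*} [Fintype V] [DecidableEq V]
    (A : Finset (V × V)) (o t : V)
    (l u : V × V → ℕ) (hlu : ∀ a, l a ≤ u a) (d : V × V → ℕ) (β : ℤ)
    (P : Set (List V))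
    (hP : P = {q : List V | IsPath A o t q ∧ (∑ a ∈ arcSet q, (d a : ℤ)) ≤ β})
    (hPne : P.Nonempty)
    (p : List V) (hp : p ∈ P) (hnonelem : ¬ p.Nodup)
    (pt : List V) (hpt : pt ∈ P) (helem : pt.Nodup)
    (hsub : arcSet pt ⊂ arcSet p) :
    (∑ a ∈ arcSet pt, (u a : ℝ)) -
        sInf {v : ℝ | ∃ q ∈ P,
          v = ∑ a ∈ arcSet q, (if a ∈ arcSet pt then (u a : ℝ) else (l a : ℝ))} ≤
      (∑ a ∈ arcSet p, (u a : ℝ)) -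
        sInf {v : ℝ | ∃ q ∈ P,
          v = ∑ a ∈ arcSet q, (if a ∈ arcSet p then (u a : ℝ) else (l a : ℝ))} := by
  have hsum : ∑ a ∈ arcSet p \ arcSet pt, (u a : ℝ) + ∑ a ∈ arcSet pt, (u a : ℝ)
      = ∑ a ∈ arcSet p, (u a : ℝ) := Finset.sum_sdiff hsub.1
  have key : sInf {v : ℝ | ∃ q ∈ P,
          v = ∑ a ∈ arcSet q, (if a ∈ arcSet p then (u a : ℝ) else (l a : ℝ))}
        - ∑ a ∈ arcSet p \ arcSet pt, (u a : ℝ) ≤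
      sInf {v : ℝ | ∃ q ∈ P,
          v = ∑ a ∈ arcSet q, (if a ∈ arcSet pt then (u a : ℝ) else (l a : ℝ))} := by
    apply le_csInf
    · obtain ⟨q, hq⟩ := hPne
      exact ⟨_, q, hq, rfl⟩
    · rintro v ⟨q, hq, rfl⟩
      have h1 : sInf {v : ℝ | ∃ q ∈ P,
          v = ∑ a ∈ arcSet q, (if a ∈ arcSet p then (u a : ℝ) else (l a : ℝ))} ≤
          ∑ a ∈ arcSet q, (if a ∈ arcSet p then (u a : ℝ) else (l a : ℝ)) := by
        apply csInf_le
        · refine ⟨0, ?_⟩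
          rintro v ⟨q, -, rfl⟩
          exact Finset.sum_nonneg fun a _ => by split_ifs <;> positivity
        · exact ⟨q, hq, rfl⟩
      have h2 : ∑ a ∈ arcSet q, (if a ∈ arcSet p then (u a : ℝ) else (l a : ℝ)) ≤
          ∑ a ∈ arcSet q, ((if a ∈ arcSet pt then (u a : ℝ) else (l a : ℝ)) +
            (if a ∈ arcSet p \ arcSet pt then (u a : ℝ) else 0)) := by
        apply Finset.sum_le_sum
        intro a _
        have hl : (0 : ℝ) ≤ l a := Nat.cast_nonneg _
        have hu : (l a : ℝ) ≤ u a := by exact_mod_cast hlu a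
        by_cases h : a ∈ arcSet p <;> by_cases h' : a ∈ arcSet pt <;> simp [h, h', hu]
      have h3 : ∑ a ∈ arcSet q, (if a ∈ arcSet p \ arcSet pt then (u a : ℝ) else 0) ≤
          ∑ a ∈ arcSet p \ arcSet pt, (u a : ℝ) := by
        rw [← Finset.sum_filter]
        apply Finset.sum_le_sum_of_subset_of_nonneg
        · intro a ha
          exact (Finset.mem_filter.1 ha).2
        · intro a _ _
          positivity
      rw [Finset.sum_add_distrib] at h2
      linarith
  linarith
end

section
/- Proposition (maximal regret scenario for R-RSP): for every β ∈ ℤ, every path p ∈ P(β), and every scenario c, the β-restricted regret of p in c is at most the β-restricted regret of p in the induced scenario s(p); that is, C_p^c − min_{q∈P(β)} C_q^c ≤ C_p^{s(p)} − min_{q∈P(β)} C_q^{s(p)}. -/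
open Finset

/-- maximal regret scenario for R-RSP: for every `β`, every path `p ∈ P(β)` and
every scenario `c`, the β-restricted regret of `p` in `c` is at most its β-restricted regret in
the scenario `s(p)` induced by `p` (cost `u` on arcs of `p`, cost `l` elsewhere). -/
theorem rrsp_regret_le_regret_induced_scenario
    {V : Type*} [Fintype V] [DecidableEq V]
    (A : Finset (V × V)) (o t : V)
    (l u : V × V → ℕ) (hlu : ∀ a, l a ≤ u a) (d : V × V → ℕ) (β : ℤ)
    (P : Set (List V))
    (hP : P = {q : List V | IsPath A o t q ∧ (∑ a ∈ arcSet q, (d a : ℤ)) ≤ β})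
    (hPne : P.Nonempty)
    (p : List V) (hp : p ∈ P)
    (c : V × V → ℝ) (hc : ∀ a, (l a : ℝ) ≤ c a ∧ c a ≤ u a) :
    (∑ a ∈ arcSet p, c a) - sInf {v : ℝ | ∃ q ∈ P, v = ∑ a ∈ arcSet q, c a} ≤
      (∑ a ∈ arcSet p, (u a : ℝ)) -
        sInf {v : ℝ | ∃ q ∈ P,
          v = ∑ a ∈ arcSet q, (if a ∈ arcSet p then (u a : ℝ) else (l a : ℝ))} := by
  have hbdd : BddBelow {v : ℝ | ∃ q ∈ P,
      v = ∑ a ∈ arcSet q, (if a ∈ arcSet p then (u a : ℝ) else (l a : ℝ))} := by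
    refine ⟨0, ?_⟩
    rintro v ⟨q, -, rfl⟩
    refine Finset.sum_nonneg fun a _ => ?_
    split_ifs <;> positivity
  have key : sInf {v : ℝ | ∃ q ∈ P,
        v = ∑ a ∈ arcSet q, (if a ∈ arcSet p then (u a : ℝ) else (l a : ℝ))}
      - ∑ a ∈ arcSet p, ((u a : ℝ) - c a)
      ≤ sInf {v : ℝ | ∃ q ∈ P, v = ∑ a ∈ arcSet q, c a} := by
    refine le_csInf ⟨_, p, hp, rfl⟩ ?_
    rintro v ⟨q, hq, rfl⟩
    have h1 := csInf_le hbdd ⟨q, hq, rfl⟩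
    have h2 : ∑ a ∈ arcSet q, ((if a ∈ arcSet p then (u a : ℝ) else (l a : ℝ)) - c a)
        ≤ ∑ a ∈ arcSet p, ((u a : ℝ) - c a) := by
      calc _ ≤ ∑ a ∈ arcSet q, (if a ∈ arcSet p then (u a : ℝ) - c a else 0) := by
            refine Finset.sum_le_sum fun a _ => ?_
            have := hc a
            split_ifs <;> linarith
        _ = ∑ a ∈ (arcSet q).filter (· ∈ arcSet p), ((u a : ℝ) - c a) := by
            rw [Finset.sum_filter]
        _ ≤ _ := by
            refine Finset.sum_le_sum_of_subset_of_nonneg ?_ ?_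
            · intro a ha
              exact (Finset.mem_filter.1 ha).2
            · intro a _ _
              have := hc a
              linarith
    rw [Finset.sum_sub_distrib] at h2
    linarith
  rw [Finset.sum_sub_distrib] at key
  linarith
end

section
/- Existence of an elementary robust path: for every β ∈ ℤ, if P(β) is nonempty, then there exists an elementary path p* ∈ P(β) that is a β-restricted robust path, i.e., whose β-restricted robustness cost R_{p*}^β equals min_{p∈P(β)} R_p^β. -/
open Finset

/-- The β-restricted robustness cost of a path `p`: the supremum over all scenarios `c`
(with `l a ≤ c a ≤ u a` for all arcs `a`) of the β-restricted regret of `p` in `c`. -/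
noncomputable def robustCost {V : Type*} [Fintype V] [DecidableEq V]
    (l u : V × V → ℕ) (P : Set (List V)) (p : List V) : ℝ :=
  sSup {r : ℝ | ∃ c : V × V → ℝ, (∀ a, (l a : ℝ) ≤ c a ∧ c a ≤ u a) ∧
    r = (∑ a ∈ arcSet p, c a) - sInf {v : ℝ | ∃ q ∈ P, v = ∑ a ∈ arcSet q, c a}}

theorem walkArcs_cons_cons {V : Type*} (x y : V) (r : List V) :
    walkArcs (x :: y :: r) = (x, y) :: walkArcs (y :: r) := by
  simp [walkArcs]

theorem walkArcs_cons_subset {V : Type*} (x : V) (r : List V) :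
    walkArcs r ⊆ walkArcs (x :: r) := by
  cases r with
  | nil => simp [walkArcs]
  | cons y r => rw [walkArcs_cons_cons]; exact List.subset_cons_self _ _

theorem walkArcs_append_subset {V : Type*} (s r : List V) :
    walkArcs r ⊆ walkArcs (s ++ r) := by
  induction s with
  | nil => simp
  | cons x s ih => exact List.Subset.trans ih (walkArcs_cons_subset x _)

theorem walkArcs_nodup {V : Type*} (p : List V) (h : p.Nodup) : (walkArcs p).Nodup := by
  apply List.Nodup.of_map Prod.snd
  unfold walkArcs
  rw [List.map_snd_zip (by simp)]
  exact h.sublist (List.tail_sublist _)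

theorem exists_nodup_shortcut {V : Type*} [DecidableEq V] (q : List V) :
    ∃ p : List V, p.Nodup ∧ p.head? = q.head? ∧ p.getLast? = q.getLast? ∧
      walkArcs p ⊆ walkArcs q := by
  induction q with
  | nil => exact ⟨[], by simp⟩
  | cons x q ih =>
    obtain ⟨p, hn, hh, hl, hs⟩ := ih
    cases q with
    | nil => exact ⟨[x], by simp⟩
    | cons y q =>
      by_cases hx : x ∈ p
      · obtain ⟨s, r, rfl⟩ := List.append_of_mem hx
        refine ⟨x :: r, (List.nodup_append.1 hn).2.1, by simp, ?_, ?_⟩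
        · rw [List.getLast?_append_of_ne_nil _ (by simp)] at hl
          rw [hl]; simp
        · exact List.Subset.trans (walkArcs_append_subset s _)
            (List.Subset.trans hs (walkArcs_cons_subset x _))
      · cases p with
        | nil => simp at hh
        | cons z p =>
          simp at hh
          subst hh
          refine ⟨x :: z :: p, List.nodup_cons.2 ⟨hx, hn⟩, by simp, ?_, ?_⟩
          · simpa using hl
          · rw [walkArcs_cons_cons, walkArcs_cons_cons]
            exact List.cons_subset_cons _ hs

theorem robustCost_mono {V : Type*} [Fintype V] [DecidableEq V]
    (l u : V × V → ℕ) (hlu : ∀ a, l a ≤ u a) (P : Set (List V)) (p q : List V)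
    (h : arcSet p ⊆ arcSet q) : robustCost l u P p ≤ robustCost l u P q := by
  unfold robustCost
  apply csSup_le
  · exact ⟨_, fun a => (l a : ℝ), fun a => ⟨le_rfl, Nat.cast_le.2 (hlu a)⟩, rfl⟩
  · rintro r ⟨c, hc, rfl⟩
    have hc0 : ∀ a, 0 ≤ c a := fun a => (Nat.cast_nonneg _).trans (hc a).1
    refine le_trans (sub_le_sub_right
      (Finset.sum_le_sum_of_subset_of_nonneg h fun a _ _ => hc0 a) _) ?_
    apply le_csSup
    · refine ⟨∑ a ∈ arcSet q, (u a : ℝ), ?_⟩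
      rintro r ⟨c, hc, rfl⟩
      have h1 : 0 ≤ sInf {v : ℝ | ∃ q ∈ P, v = ∑ a ∈ arcSet q, c a} := by
        apply Real.sInf_nonneg
        rintro v ⟨q, _, rfl⟩
        exact Finset.sum_nonneg fun a _ => (Nat.cast_nonneg _).trans (hc a).1
      have h2 : ∑ a ∈ arcSet q, c a ≤ ∑ a ∈ arcSet q, (u a : ℝ) :=
        Finset.sum_le_sum fun a _ => (hc a).2
      linarith
    · exact ⟨c, hc, rfl⟩

/-- existence of an elementary robust path: for every `β`, if `P(β)` is nonempty,
then some elementary path `p* ∈ P(β)` is a β-restricted robust path, i.e. its β-restricted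
robustness cost equals `min_{p ∈ P(β)} R_p^β`. -/
theorem exists_elementary_robust_path
    {V : Type*} [Fintype V] [DecidableEq V]
    (A : Finset (V × V)) (o t : V)
    (l u : V × V → ℕ) (hlu : ∀ a, l a ≤ u a) (d : V × V → ℕ) (β : ℤ)
    (P : Set (List V))
    (hP : P = {q : List V | IsPath A o t q ∧ (∑ a ∈ arcSet q, (d a : ℤ)) ≤ β})
    (hPne : P.Nonempty) :
    ∃ p ∈ P, p.Nodup ∧
      robustCost l u P p = sInf {r : ℝ | ∃ q ∈ P, r = robustCost l u P q} := by
  have key : ∀ q ∈ P, ∃ p ∈ P, p.Nodup ∧ robustCost l u P p ≤ robustCost l u P q := by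
    intro q hq
    obtain ⟨p, hn, hh, hl, hs⟩ := exists_nodup_shortcut q
    have hsub : arcSet p ⊆ arcSet q := by
      intro a ha
      simp only [arcSet, List.mem_toFinset] at ha ⊢
      exact hs ha
    refine ⟨p, ?_, hn, robustCost_mono l u hlu P p q hsub⟩
    rw [hP] at hq ⊢
    obtain ⟨⟨h1, h2, h3, h4⟩, h5⟩ := hq
    exact ⟨⟨hh.trans h1, hl.trans h2, fun a ha => h3 a (hs ha), walkArcs_nodup p hn⟩,
      (Finset.sum_le_sum_of_subset_of_nonneg hsub fun a _ _ => by positivity).trans h5⟩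
  have hfin : {p : List V | p ∈ P ∧ p.Nodup}.Finite := by
    refine (List.finite_length_le V (Fintype.card V)).subset ?_
    rintro p ⟨_, hp⟩
    exact hp.length_le_card
  have hne : {p : List V | p ∈ P ∧ p.Nodup}.Nonempty := by
    obtain ⟨q, hq⟩ := hPne
    obtain ⟨p, hp, hn, _⟩ := key q hq
    exact ⟨p, hp, hn⟩
  obtain ⟨p, ⟨hp, hn⟩, hmin⟩ := Set.exists_min_image _ (robustCost l u P) hfin hne
  refine ⟨p, hp, hn, ?_⟩
  symm
  apply IsLeast.csInf_eq
  refine ⟨⟨p, hp, rfl⟩, ?_⟩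
  rintro r ⟨q, hq, rfl⟩
  obtain ⟨p', hp', hn', hle⟩ := key q hq
  exact (hmin p' ⟨hp', hn'⟩).trans hle
end

section
/- Proposition (maximal regret scenario for the robust set covering problem): for every covering K ∈ Λ and every scenario c, the regret of K in c is at most the regret of K in the induced scenario s(K); that is, Σ_{j∈K} c j − min_{K'∈Λ} Σ_{j∈K'} c j ≤ Σ_{j∈K} u j − min_{K'∈Λ} ( Σ_{j∈K'∩K} u j + Σ_{j∈K'\K} l j ). -/
open Finset

/-- maximal regret scenario for the robust set covering problem: for every
covering `K ∈ Λ` and every scenario `c`, the regret of `K` in `c` is at most the regret of `K`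
in the scenario `s(K)` induced by `K` (cost `u` on columns of `K`, cost `l` elsewhere). -/
theorem rsc_regret_le_regret_induced_scenario
    {I J : Type*} [Fintype I] [Fintype J] [DecidableEq J]
    (O : I → J → ℕ) (hO : ∀ i j, O i j = 0 ∨ O i j = 1)
    (l u : J → ℕ) (hlu : ∀ j, l j ≤ u j)
    (Λ : Set (Finset J))
    (hΛ : Λ = {K : Finset J | ∀ i, ∃ j ∈ K, O i j = 1})
    (hΛne : Λ.Nonempty)
    (K : Finset J) (hK : K ∈ Λ)
    (c : J → ℝ) (hc : ∀ j, (l j : ℝ) ≤ c j ∧ c j ≤ u j) :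
    (∑ j ∈ K, c j) - sInf {v : ℝ | ∃ K' ∈ Λ, v = ∑ j ∈ K', c j} ≤
      (∑ j ∈ K, (u j : ℝ)) -
        sInf {v : ℝ | ∃ K' ∈ Λ,
          v = (∑ j ∈ K' ∩ K, (u j : ℝ)) + ∑ j ∈ K' \ K, (l j : ℝ)} := by
  have key : (sInf {v : ℝ | ∃ K' ∈ Λ,
          v = (∑ j ∈ K' ∩ K, (u j : ℝ)) + ∑ j ∈ K' \ K, (l j : ℝ)})
      - ((∑ j ∈ K, (u j : ℝ)) - ∑ j ∈ K, c j) ≤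
      sInf {v : ℝ | ∃ K' ∈ Λ, v = ∑ j ∈ K', c j} := by
    apply le_csInf
    · exact ⟨_, K, hK, rfl⟩
    · rintro v ⟨K', hK', rfl⟩
      have h1 : sInf {v : ℝ | ∃ K' ∈ Λ,
          v = (∑ j ∈ K' ∩ K, (u j : ℝ)) + ∑ j ∈ K' \ K, (l j : ℝ)} ≤
          (∑ j ∈ K' ∩ K, (u j : ℝ)) + ∑ j ∈ K' \ K, (l j : ℝ) := by
        apply csInf_le
        · refine ⟨0, ?_⟩
          rintro v ⟨L, _, rfl⟩
          positivity
        · exact ⟨K', hK', rfl⟩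
      have h2 : ∑ j ∈ K' \ K, (l j : ℝ) ≤ ∑ j ∈ K' \ K, c j :=
        Finset.sum_le_sum fun j _ => (hc j).1
      have h3 : ∑ j ∈ K' ∩ K, ((u j : ℝ) - c j) ≤ ∑ j ∈ K, ((u j : ℝ) - c j) :=
        Finset.sum_le_sum_of_subset_of_nonneg Finset.inter_subset_right
          fun j _ _ => sub_nonneg.2 (hc j).2
      have h4 := Finset.sum_inter_add_sum_sdiff K' K c
      rw [Finset.sum_sub_distrib, Finset.sum_sub_distrib] at h3
      linarith
  linarith
end

section
/- Intermediate inequality (b15) in the proof of Theorem 2: let F be a nonempty finite family of subsets of E, let p̃, p ∈ F with p̃ ⊆ p, and let q* ∈ F minimize the cost under the scenario s(p̃) induced by p̃, i.e., Σ_{e∈q*} s(p̃) e = min_{q∈F} Σ_{e∈q} s(p̃) e. Then Σ_{e∈p̃} s(p̃) e − Σ_{e∈q*} s(p̃) e ≤ Σ_{e∈p} s(p) e − Σ_{e∈q*} s(p) e. -/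
open Finset

/-- intermediate inequality (b15) in the proof of Theorem 2: if `F` is a nonempty
finite family of subsets of `E`, `p̃, p ∈ F` with `p̃ ⊆ p`, and `q* ∈ F` minimizes the cost under
the scenario `s(p̃)` induced by `p̃` (which assigns `u e` to `e ∈ p̃` and `l e` otherwise), then
`C_{p̃}^{s(p̃)} - C_{q*}^{s(p̃)} ≤ C_p^{s(p)} - C_{q*}^{s(p)}`. -/
theorem induced_regret_intermediate_inequality
    {α : Type*} [Fintype α] [DecidableEq α]
    (l u : α → ℝ) (hl : ∀ e, 0 ≤ l e) (hlu : ∀ e, l e ≤ u e)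
    (F : Finset (Finset α)) (hF : F.Nonempty)
    (pt p : Finset α) (hptF : pt ∈ F) (hpF : p ∈ F) (hsub : pt ⊆ p)
    (qstar : Finset α) (hq : qstar ∈ F)
    (hqmin : (∑ e ∈ qstar, (if e ∈ pt then u e else l e)) =
      F.inf' hF (fun q => ∑ e ∈ q, (if e ∈ pt then u e else l e))) :
    (∑ e ∈ pt, (if e ∈ pt then u e else l e)) -
        (∑ e ∈ qstar, (if e ∈ pt then u e else l e)) ≤
      (∑ e ∈ p, (if e ∈ p then u e else l e)) -
        (∑ e ∈ qstar, (if e ∈ p then u e else l e)) := by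
  have key : ∀ (s : Finset α) (f : α → ℝ),
      ∑ e ∈ s, f e = ∑ e, if e ∈ s then f e else 0 := by
    intro s f
    simp
  rw [key pt, key p, key qstar, key qstar, ← Finset.sum_sub_distrib, ← Finset.sum_sub_distrib]
  apply Finset.sum_le_sum
  intro e _
  have h1 := hl e
  have h2 := hlu e
  have h3 := @hsub e
  by_cases a : e ∈ pt
  · have b := h3 a
    simp [a, b]
  · by_cases b : e ∈ p <;> by_cases c : e ∈ qstar <;> simp [a, b, c] <;> linarith
end

section
/- Validity of the LP-based heuristic bound for the robust set covering problem: let Y ∈ Λ be a covering and let λ : I → ℝ satisfy λ i ≥ 0 for all i ∈ I and Σ_{i∈I, O i j = 1} λ i ≤ l j + (u j − l j) * (1 if j ∈ Y else 0) for every j ∈ J. Then the optimal robustness cost min_{K∈Λ} R_K is at most Σ_{j∈Y} u j − Σ_{i∈I} λ i. -/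
open Finset

/-- validity of the LP-based heuristic bound for the robust set covering problem:
if `Y ∈ Λ` is a covering and `λ : I → ℝ` is nonnegative with
`∑_{i : O i j = 1} λ i ≤ l j + (u j - l j) * [j ∈ Y]` for every column `j`, then the optimal
robustness cost `min_{K ∈ Λ} R_K` is at most `∑_{j ∈ Y} u j - ∑ i, λ i`. -/
theorem rsc_lp_heuristic_upper_bound
    {I J : Type*} [Fintype I] [Fintype J] [DecidableEq J]
    (O : I → J → ℕ) (hO : ∀ i j, O i j = 0 ∨ O i j = 1)
    (l u : J → ℕ) (hlu : ∀ j, l j ≤ u j)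
    (Λ : Set (Finset J))
    (hΛ : Λ = {K : Finset J | ∀ i, ∃ j ∈ K, O i j = 1})
    (hΛne : Λ.Nonempty)
    (Y : Finset J) (hY : Y ∈ Λ)
    (lam : I → ℝ) (hlam : ∀ i, 0 ≤ lam i)
    (hdual : ∀ j, (∑ i ∈ Finset.univ.filter (fun i => O i j = 1), lam i) ≤
      (l j : ℝ) + ((u j : ℝ) - (l j : ℝ)) * (if j ∈ Y then 1 else 0)) :
    sInf {r : ℝ | ∃ K ∈ Λ,
        r = sSup {t : ℝ | ∃ c : J → ℝ, (∀ j, (l j : ℝ) ≤ c j ∧ c j ≤ u j) ∧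
          t = (∑ j ∈ K, c j) - sInf {v : ℝ | ∃ K' ∈ Λ, v = ∑ j ∈ K', c j}}} ≤
      (∑ j ∈ Y, (u j : ℝ)) - ∑ i, lam i := by
  subst hΛ
  have key : ∀ c : J → ℝ, (∀ j, (l j : ℝ) ≤ c j ∧ c j ≤ u j) →
      ∀ K' : Finset J, (∀ i, ∃ j ∈ K', O i j = 1) →
      (∑ j ∈ Y, c j) - (∑ j ∈ Y, (u j : ℝ)) + ∑ i, lam i ≤ ∑ j ∈ K', c j := by
    intro c hc K' hK'
    have h1 : ∑ i, lam i ≤ ∑ j ∈ K', ∑ i, if O i j = 1 then lam i else 0 := by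
      rw [Finset.sum_comm]
      refine Finset.sum_le_sum fun i _ => ?_
      obtain ⟨j, hj, hij⟩ := hK' i
      have h := Finset.single_le_sum (f := fun j => if O i j = 1 then lam i else 0)
        (fun j _ => by
          have := hlam i
          split_ifs <;> simp [this]) hj
      simpa [hij] using h
    have h2 : ∑ j ∈ K', (∑ i, if O i j = 1 then lam i else 0) ≤
        ∑ j ∈ K', (c j + if j ∈ Y then (u j : ℝ) - c j else 0) := by
      refine Finset.sum_le_sum fun j _ => ?_
      have h := hdual j
      rw [Finset.sum_filter] at h
      refine h.trans ?_
      have := hc j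
      split_ifs <;> linarith
    have h3 : ∑ j ∈ K', (if j ∈ Y then (u j : ℝ) - c j else 0) ≤
        ∑ j, (if j ∈ Y then (u j : ℝ) - c j else 0) := by
      refine Finset.sum_le_sum_of_subset_of_nonneg (Finset.subset_univ _) fun j _ _ => ?_
      have := hc j
      split_ifs <;> linarith
    have h4 : ∑ j, (if j ∈ Y then (u j : ℝ) - c j else 0) =
        (∑ j ∈ Y, (u j : ℝ)) - ∑ j ∈ Y, c j := by
      rw [← Finset.sum_sub_distrib, Finset.sum_ite_mem, Finset.univ_inter]
    rw [Finset.sum_add_distrib] at h2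
    linarith
  refine csInf_le_of_le ?_ ⟨Y, hY, rfl⟩ ?_
  · apply Set.Finite.bddBelow
    refine (Set.finite_range (fun K : Finset J =>
      sSup {t : ℝ | ∃ c : J → ℝ, (∀ j, (l j : ℝ) ≤ c j ∧ c j ≤ u j) ∧
          t = (∑ j ∈ K, c j) - sInf {v : ℝ | ∃ K' ∈ {K : Finset J | ∀ i, ∃ j ∈ K, O i j = 1},
            v = ∑ j ∈ K', c j}})).subset ?_
    rintro r ⟨K, _, rfl⟩
    exact ⟨K, rfl⟩
  · refine csSup_le ⟨_, fun j => (l j : ℝ), fun j => ⟨le_rfl, Nat.cast_le.mpr (hlu j)⟩, rfl⟩ ?_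
    rintro t ⟨c, hc, rfl⟩
    have : (∑ j ∈ Y, c j) - (∑ j ∈ Y, (u j : ℝ)) + ∑ i, lam i ≤
        sInf {v : ℝ | ∃ K' ∈ {K : Finset J | ∀ i, ∃ j ∈ K, O i j = 1},
            v = ∑ j ∈ K', c j} := by
      refine le_csInf ⟨_, Y, hY, rfl⟩ ?_
      rintro v ⟨K', hK', rfl⟩
      exact key c hc K' hK'
    linarith
end

section
/- Validity of the LP-based heuristic bound for the restricted robust shortest path problem: let β ∈ ℤ, let p ∈ P(β), and let λ : V → ℝ and μ ∈ ℝ with μ ≥ 0 satisfy, for every arc a = (i, j) ∈ A, the constraint λ j ≤ λ i + l a + (u a − l a) * (1 if a ∈ A[p] else 0) + d a * μ. Then the optimal β-restricted robustness cost min_{q∈P(β)} R_q^β is at most Σ_{a∈A[p]} u a − λ t + λ o + β * μ. -/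
open Finset

theorem walkArcs_telescope {V : Type*} (lam : V → ℝ) (t : V) :
    ∀ (vs : List V) (o : V), vs.head? = some o → vs.getLast? = some t →
      ((walkArcs vs).map (fun a => lam a.2 - lam a.1)).sum = lam t - lam o
  | [], o, h, _ => by simp at h
  | [x], o, h, h' => by
    simp at h h'
    subst h; subst h'
    simp [walkArcs]
  | x :: y :: vs, o, h, h' => by
    have ih := walkArcs_telescope lam t (y :: vs) y (by simp) (by simpa using h')
    simp only [List.head?_cons, Option.some.injEq] at h
    subst h
    have e : walkArcs (x :: y :: vs) = (x, y) :: walkArcs (y :: vs) := by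
      simp [walkArcs]
    rw [e, List.map_cons, List.sum_cons, ih]
    ring

/-- validity of the LP-based heuristic bound for R-RSP: if `p ∈ P(β)` and
`(λ, μ)` with `μ ≥ 0` satisfy, for every arc `(i, j) ∈ A`,
`λ j ≤ λ i + l a + (u a - l a) * [a ∈ A[p]] + d a * μ`, then the optimal β-restricted
robustness cost `min_{q ∈ P(β)} R_q^β` is at most
`∑_{a ∈ A[p]} u a - λ t + λ o + β * μ`. -/
theorem rrsp_lp_heuristic_upper_bound
    {V : Type*} [Fintype V] [DecidableEq V]
    (A : Finset (V × V)) (o t : V)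
    (l u : V × V → ℕ) (hlu : ∀ a, l a ≤ u a) (d : V × V → ℕ) (β : ℤ)
    (P : Set (List V))
    (hP : P = {q : List V | IsPath A o t q ∧ (∑ a ∈ arcSet q, (d a : ℤ)) ≤ β})
    (hPne : P.Nonempty)
    (p : List V) (hp : p ∈ P)
    (lam : V → ℝ) (mu : ℝ) (hmu : 0 ≤ mu)
    (hdual : ∀ a ∈ A, lam a.2 ≤ lam a.1 + (l a : ℝ) +
      ((u a : ℝ) - (l a : ℝ)) * (if a ∈ arcSet p then 1 else 0) + (d a : ℝ) * mu) :
    sInf {r : ℝ | ∃ q ∈ P, r = robustCost l u P q} ≤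
      (∑ a ∈ arcSet p, (u a : ℝ)) - lam t + lam o + (β : ℝ) * mu := by
  have hc0 : ∀ c : V × V → ℝ, (∀ a, (l a : ℝ) ≤ c a ∧ c a ≤ u a) → ∀ q : List V,
      0 ≤ ∑ a ∈ arcSet q, c a := fun c hc q =>
    Finset.sum_nonneg fun a _ => le_trans (Nat.cast_nonneg _) (hc a).1
  have hnn : ∀ q ∈ P, 0 ≤ robustCost l u P q := by
    intro q hq
    apply Real.sSup_nonneg
    rintro r ⟨c, hc, rfl⟩
    rw [sub_nonneg]
    apply csInf_le
    · refine ⟨0, ?_⟩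
      rintro v ⟨q', _, rfl⟩
      exact hc0 c hc q'
    · exact ⟨q, hq, rfl⟩
  refine le_trans (csInf_le ⟨0, ?_⟩ ⟨p, hp, rfl⟩) ?_
  · rintro r ⟨q, hq, rfl⟩
    exact hnn q hq
  apply csSup_le
  · exact ⟨_, fun a => (u a : ℝ), fun a => ⟨Nat.cast_le.2 (hlu a), le_rfl⟩, rfl⟩
  rintro r ⟨c, hc, rfl⟩
  have key : (∑ a ∈ arcSet p, c a) - ((∑ a ∈ arcSet p, (u a : ℝ)) - lam t + lam o + (β : ℝ) * mu)
      ≤ sInf {v : ℝ | ∃ q ∈ P, v = ∑ a ∈ arcSet q, c a} := by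
    apply le_csInf
    · exact ⟨_, p, hp, rfl⟩
    rintro v ⟨q, hq, rfl⟩
    rw [hP] at hq
    obtain ⟨⟨h1, h2, h3, h4⟩, h5⟩ := hq
    have tel : ∑ a ∈ arcSet q, (lam a.2 - lam a.1) = lam t - lam o := by
      rw [arcSet, List.sum_toFinset _ h4]
      exact walkArcs_telescope lam t q o h1 h2
    have hd : (∑ a ∈ arcSet q, (d a : ℝ)) * mu ≤ β * mu := by
      apply mul_le_mul_of_nonneg_right _ hmu
      exact_mod_cast h5
    have hs : ∑ a ∈ arcSet q, (lam a.2 - lam a.1) ≤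
        ∑ a ∈ arcSet q, (c a + (if a ∈ arcSet p then (u a : ℝ) - c a else 0) + d a * mu) := by
      apply Finset.sum_le_sum
      intro a ha
      have := hdual a (h3 a (by simpa [arcSet] using ha))
      have := (hc a).1
      split_ifs at * <;> linarith
    have hi : ∑ a ∈ arcSet q, (if a ∈ arcSet p then (u a : ℝ) - c a else 0) ≤
        ∑ a ∈ arcSet p, ((u a : ℝ) - c a) := by
      rw [← Finset.sum_filter]
      apply Finset.sum_le_sum_of_subset_of_nonneg
      · intro a ha
        exact (Finset.mem_filter.1 ha).2
      · intro a _ _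
        linarith [(hc a).2]
    rw [Finset.sum_add_distrib, Finset.sum_add_distrib, ← Finset.sum_mul, tel] at hs
    rw [Finset.sum_sub_distrib] at hi
    linarith
  linarith
end
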